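/- Compatibility with classical real calculus: Let n, m ∈ ℕ, U ⊆ ℝⁿ open, and f : U → ℝᵐ. Then f is continuously differentiable in the classical (Fréchet) sense on U if and only if f is C¹ in the extended-difference-quotient sense, i.e. if and only if f is continuous and there exists a continuous map f^{[1]} : U^{[1]} → ℝᵐ with f^{[1]}(x,y,t) = t⁻¹·(f(x + t·y) − f(x)) for all (x,y,t) ∈ U^{[1]} with t ≠ 0. -/

import Mathlib

open Set Metric Filter Topology

/-- For an open set `U ⊆ E`, the extended domain
`U^{[1]} = {(x,y,t) : x ∈ U, x + t·y ∈ U}` of the difference quotient map. -/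
def UOne (𝕜 : Type*) {E : Type*} [Field 𝕜] [AddCommGroup E] [Module 𝕜 E]
    (U : Set E) : Set (E × E × 𝕜) :=
  {p | p.1 ∈ U ∧ p.1 + p.2.2 • p.2.1 ∈ U}

/-- `g : U^{[1]} → F` extends the directional difference quotients of `f`:
`g (x,y,t) = t⁻¹ • (f (x + t·y) - f x)` whenever `t ≠ 0`. -/
def IsDiffQuotOn (𝕜 : Type*) {E F : Type*} [Field 𝕜] [AddCommGroup E] [Module 𝕜 E]
    [AddCommGroup F] [Module 𝕜 F] (U : Set E) (f : E → F) (g : E × E × 𝕜 → F) : Prop :=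
  ∀ p ∈ UOne 𝕜 U, p.2.2 ≠ 0 → g p = (p.2.2)⁻¹ • (f (p.1 + p.2.2 • p.2.1) - f p.1)

/-- `f` is `C¹` on the open set `U` in the sense of extended difference quotients:
`f` is continuous on `U` and there is a continuous map `f^{[1]} : U^{[1]} → F`
extending the directional difference quotients of `f`. -/
def IsC1On (𝕜 : Type*) {E F : Type*} [Field 𝕜] [TopologicalSpace 𝕜]
    [AddCommGroup E] [Module 𝕜 E] [TopologicalSpace E]
    [AddCommGroup F] [Module 𝕜 F] [TopologicalSpace F]
    (U : Set E) (f : E → F) : Prop :=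
  ContinuousOn f U ∧
    ∃ g : E × E × 𝕜 → F, ContinuousOn g (UOne 𝕜 U) ∧ IsDiffQuotOn 𝕜 U f g

/-- `f` is `C²` on the open set `U`: it is `C¹` with a witness `f^{[1]}` which is
itself `C¹` on the open set `U^{[1]}`. -/
def IsC2On (𝕜 : Type*) {E F : Type*} [Field 𝕜] [TopologicalSpace 𝕜]
    [AddCommGroup E] [Module 𝕜 E] [TopologicalSpace E]
    [AddCommGroup F] [Module 𝕜 F] [TopologicalSpace F]
    (U : Set E) (f : E → F) : Prop :=
  ContinuousOn f U ∧
    ∃ g : E × E × 𝕜 → F, ContinuousOn g (UOne 𝕜 U) ∧ IsDiffQuotOn 𝕜 U f g ∧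
      IsC1On 𝕜 (UOne 𝕜 U) g

/-!
Over `ℝ` or `ℂ`, being `C¹` on an open set means being strictly differentiable at each of its
points, so it suffices to compare strict differentiability with the existence of `f^{[1]}`.

If `f` is strictly differentiable, its difference quotient converges at every point of `U^{[1]}`
along the dense set `t ≠ 0`, and so extends continuously. Conversely, the identities
`f^{[1]} (x, y + z, t) = f^{[1]} (x, y, t) + f^{[1]} (x + t • y, z, t)` and
`f^{[1]} (x, c • y, t) = c • f^{[1]} (x, y, t * c)` for `t ≠ 0` pass to the limit `t → 0` and make
`L := f^{[1]} (x, ·, 0)` linear. Writing an increment as `h = t • v` with `‖v‖ ≤ 1` and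
`‖t‖ ≤ C * ‖h‖`, the remainder `f (z + h) - f z - L h` equals
`t • (f^{[1]} (z, v, t) - f^{[1]} (x, v, 0))`, and the bracket is uniformly small as
`(z, t) → (x, 0)` because the unit ball is compact.
-/

section Algebra

variable {𝕜 E F : Type*} [Field 𝕜]
  [AddCommGroup E] [Module 𝕜 E] [AddCommGroup F] [Module 𝕜 F]
  {U : Set E} {f : E → F} {g : E × E × 𝕜 → F} {x y z : E} {t : 𝕜}

@[simp]
lemma mk_zero_mem_UOne : (x, y, (0 : 𝕜)) ∈ UOne 𝕜 U ↔ x ∈ U := by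
  simp [UOne]

lemma IsDiffQuotOn.smul_eq_sub (hg : IsDiffQuotOn 𝕜 U f g) (h : (x, y, t) ∈ UOne 𝕜 U) :
    t • g (x, y, t) = f (x + t • y) - f x := by
  rcases eq_or_ne t 0 with rfl | ht
  · simp
  · rw [hg _ h ht, smul_inv_smul₀ ht]

lemma IsDiffQuotOn.apply_add_of_ne_zero (hg : IsDiffQuotOn 𝕜 U f g) (ht : t ≠ 0)
    (hy : (x, y, t) ∈ UOne 𝕜 U) (hz : (x + t • y, z, t) ∈ UOne 𝕜 U) :
    g (x, y + z, t) = g (x, y, t) + g (x + t • y, z, t) := by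
  have hyz : x + t • (y + z) = x + t • y + t • z := by rw [smul_add, add_assoc]
  have hmem : (x, y + z, t) ∈ UOne 𝕜 U := ⟨hy.1, hyz ▸ hz.2⟩
  apply smul_right_injective F ht
  simp only [smul_add t (g _), hg.smul_eq_sub hmem, hg.smul_eq_sub hy, hg.smul_eq_sub hz, hyz]
  abel

lemma IsDiffQuotOn.apply_smul_of_ne_zero (hg : IsDiffQuotOn 𝕜 U f g) (c : 𝕜) (ht : t ≠ 0)
    (h : (x, c • y, t) ∈ UOne 𝕜 U) : g (x, c • y, t) = c • g (x, y, t * c) := by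
  have hmem : (x, y, t * c) ∈ UOne 𝕜 U := ⟨h.1, by simpa only [mul_smul] using h.2⟩
  apply smul_right_injective F ht
  simp only [hg.smul_eq_sub h, smul_smul, hg.smul_eq_sub hmem]

/-- The difference quotient `(x, y, t) ↦ t⁻¹ • (f (x + t • y) - f x)` of `f`, which a map
`f^{[1]}` has to extend continuously. Its value at `t = 0` is the junk value `0`. -/
def diffQuot (𝕜 : Type*) {E F : Type*} [Field 𝕜] [AddCommGroup E] [Module 𝕜 E]
    [AddCommGroup F] [Module 𝕜 F] (f : E → F) (p : E × E × 𝕜) : F :=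
  p.2.2⁻¹ • (f (p.1 + p.2.2 • p.2.1) - f p.1)

end Algebra

section Topology

lemma dense_setOf_snd_snd_ne_zero {X Y R : Type*} [TopologicalSpace X] [TopologicalSpace Y]
    [TopologicalSpace R] [Zero R] [(𝓝[≠] (0 : R)).NeBot] :
    Dense {p : X × Y × R | p.2.2 ≠ 0} :=
  (dense_compl_singleton (0 : R)).preimage (isOpenMap_snd.comp isOpenMap_snd)

variable {𝕜 E F : Type*} [Field 𝕜] [TopologicalSpace 𝕜]
  [AddCommGroup E] [Module 𝕜 E] [TopologicalSpace E] [ContinuousAdd E] [ContinuousSMul 𝕜 E]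
  {U : Set E} {f : E → F} {g : E × E × 𝕜 → F} {x y : E} {t : 𝕜}

lemma isOpen_UOne (hU : IsOpen U) : IsOpen (UOne 𝕜 U) :=
  (hU.preimage continuous_fst).inter
    (hU.preimage (by fun_prop : Continuous fun p : E × E × 𝕜 ↦ p.1 + p.2.2 • p.2.1))

variable [TopologicalSpace F]

lemma continuousAt_apply_mk_zero (hU : IsOpen U) (hgc : ContinuousOn g (UOne 𝕜 U))
    (hx : x ∈ U) (y : E) : ContinuousAt g (x, y, 0) :=
  hgc.continuousAt ((isOpen_UOne hU).mem_nhds (mk_zero_mem_UOne.2 hx))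

lemma eventually_forall_mem_UOne_and_norm_sub_lt {G : Type*} [SeminormedAddCommGroup G]
    {g : E × E × 𝕜 → G} (hU : IsOpen U) (hgc : ContinuousOn g (UOne 𝕜 U)) (hx : x ∈ U)
    {K : Set E} (hK : IsCompact K) {ε : ℝ} (hε : 0 < ε) :
    ∀ᶠ q : E × 𝕜 in 𝓝 (x, 0), ∀ v ∈ K,
      (q.1, v, q.2) ∈ UOne 𝕜 U ∧ ‖g (q.1, v, q.2) - g (x, v, 0)‖ < ε := by
  refine hK.eventually_forall_of_forall_eventually fun v _ ↦ ?_
  have hcont := continuousAt_apply_mk_zero hU hgc hx v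
  have hmove : ContinuousAt (fun r : (E × 𝕜) × E ↦ (r.1.1, r.2, r.1.2)) ((x, 0), v) := by fun_prop
  have hfix : ContinuousAt (fun r : (E × 𝕜) × E ↦ (x, r.2, (0 : 𝕜))) ((x, 0), v) := by fun_prop
  have hdiff : ContinuousAt (fun r : (E × 𝕜) × E ↦ ‖g (r.1.1, r.2, r.1.2) - g (x, r.2, 0)‖)
      ((x, 0), v) :=
    ((hcont.comp_of_eq hmove rfl).sub (hcont.comp_of_eq hfix rfl)).norm
  exact (hmove.eventually_mem ((isOpen_UOne hU).mem_nhds (mk_zero_mem_UOne.2 hx))).and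
    (hdiff.eventually_lt_const (by simpa using hε))

variable [AddCommGroup F] [Module 𝕜 F]

lemma IsDiffQuotOn.apply_add_zero [(𝓝[≠] (0 : 𝕜)).NeBot] [ContinuousAdd F] [T2Space F]
    (hg : IsDiffQuotOn 𝕜 U f g) (hU : IsOpen U) (hgc : ContinuousOn g (UOne 𝕜 U)) (hx : x ∈ U)
    (y z : E) :
    g (x, y + z, 0) = g (x, y, 0) + g (x, z, 0) := by
  have hcont := continuousAt_apply_mk_zero hU hgc hx
  have hy : ContinuousAt (fun t : 𝕜 ↦ (x, y, t)) 0 := by fun_prop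
  have hz : ContinuousAt (fun t : 𝕜 ↦ (x + t • y, z, t)) 0 := by fun_prop
  have hyz : ContinuousAt (fun t : 𝕜 ↦ (x, y + z, t)) 0 := by fun_prop
  have hoff : ∀ᶠ t in 𝓝[≠] (0 : 𝕜), g (x, y + z, t) = g (x, y, t) + g (x + t • y, z, t) := by
    have hymem := hy.eventually_mem ((isOpen_UOne hU).mem_nhds (mk_zero_mem_UOne.2 hx))
    have hzmem := hz.eventually_mem ((isOpen_UOne hU).mem_nhds (by simpa using hx))
    filter_upwards [self_mem_nhdsWithin, hymem.filter_mono nhdsWithin_le_nhds,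
      hzmem.filter_mono nhdsWithin_le_nhds] with t ht hyt hzt
    exact hg.apply_add_of_ne_zero ht hyt hzt
  have hlhs : ContinuousAt (fun t ↦ g (x, y + z, t)) 0 := (hcont _).comp_of_eq hyz rfl
  have hrhs : ContinuousAt (fun t ↦ g (x, y, t) + g (x + t • y, z, t)) 0 :=
    ((hcont y).comp_of_eq hy rfl).add ((hcont z).comp_of_eq hz (by simp))
  have hnear := (hlhs.eventuallyEq_nhds_iff_eventuallyEq_nhdsNE hrhs).1 hoff
  simpa using hnear.eq_of_nhds

lemma IsDiffQuotOn.apply_smul_zero [(𝓝[≠] (0 : 𝕜)).NeBot] [ContinuousMul 𝕜]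
    [ContinuousConstSMul 𝕜 F] [T2Space F] (hg : IsDiffQuotOn 𝕜 U f g) (hU : IsOpen U)
    (hgc : ContinuousOn g (UOne 𝕜 U)) (hx : x ∈ U) (c : 𝕜) (y : E) :
    g (x, c • y, 0) = c • g (x, y, 0) := by
  have hcont := continuousAt_apply_mk_zero hU hgc hx
  have hcy : ContinuousAt (fun t : 𝕜 ↦ (x, c • y, t)) 0 := by fun_prop
  have hy : ContinuousAt (fun t : 𝕜 ↦ (x, y, t * c)) 0 := by fun_prop
  have hoff : ∀ᶠ t in 𝓝[≠] (0 : 𝕜), g (x, c • y, t) = c • g (x, y, t * c) := by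
    have hmem := hcy.eventually_mem ((isOpen_UOne hU).mem_nhds (mk_zero_mem_UOne.2 hx))
    filter_upwards [self_mem_nhdsWithin, hmem.filter_mono nhdsWithin_le_nhds] with t ht hcyt
    exact hg.apply_smul_of_ne_zero c ht hcyt
  have hlhs : ContinuousAt (fun t ↦ g (x, c • y, t)) 0 := (hcont _).comp_of_eq hcy rfl
  have hrhs : ContinuousAt (fun t ↦ c • g (x, y, t * c)) 0 :=
    ((hcont y).comp_of_eq hy (by simp)).const_smul c
  have hnear := (hlhs.eventuallyEq_nhds_iff_eventuallyEq_nhdsNE hrhs).1 hoff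
  simpa using hnear.eq_of_nhds

/-- The derivative of `f` at `x` read off from a continuous extension `g = f^{[1]}` of its
difference quotients: the continuous linear map `y ↦ f^{[1]} (x, y, 0)`. -/
def IsDiffQuotOn.derivCLM [(𝓝[≠] (0 : 𝕜)).NeBot] [ContinuousMul 𝕜] [ContinuousAdd F]
    [ContinuousConstSMul 𝕜 F] [T2Space F]
    (hg : IsDiffQuotOn 𝕜 U f g) (hU : IsOpen U) (hgc : ContinuousOn g (UOne 𝕜 U)) (hx : x ∈ U) :
    E →L[𝕜] F where
  toFun y := g (x, y, 0)
  map_add' := hg.apply_add_zero hU hgc hx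
  map_smul' := hg.apply_smul_zero hU hgc hx
  cont := continuous_iff_continuousAt.2 fun y ↦
    (continuousAt_apply_mk_zero hU hgc hx y).comp (f := fun y ↦ (x, y, (0 : 𝕜))) (by fun_prop)

lemma continuousAt_diffQuot [ContinuousInv₀ 𝕜] [IsTopologicalAddGroup F] [ContinuousSMul 𝕜 F]
    (ht : t ≠ 0) (hx : ContinuousAt f x) (hxy : ContinuousAt f (x + t • y)) :
    ContinuousAt (diffQuot 𝕜 f) (x, y, t) := by
  have hinv : ContinuousAt (fun p : E × E × 𝕜 ↦ p.2.2⁻¹) (x, y, t) :=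
    ContinuousAt.inv₀ (by fun_prop) ht
  have hshift : ContinuousAt (fun p : E × E × 𝕜 ↦ f (p.1 + p.2.2 • p.2.1)) (x, y, t) :=
    hxy.comp (f := fun p : E × E × 𝕜 ↦ p.1 + p.2.2 • p.2.1) (by fun_prop)
  exact hinv.smul (hshift.sub (hx.comp continuousAt_fst))

end Topology

section StrictDerivative

variable {𝕜 E F : Type*} [NontriviallyNormedField 𝕜]
  [AddCommGroup E] [Module 𝕜 E] [TopologicalSpace E] [ContinuousAdd E] [ContinuousSMul 𝕜 E]
  [AddCommGroup F] [Module 𝕜 F] [TopologicalSpace F]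
  {U : Set E} {f : E → F} {x : E}

lemma tendsto_smul_sub_of_hasStrictFDerivAt [ContinuousAdd F] [ContinuousSMul 𝕜 F]
    {f' : E →L[𝕜] F} (hf : HasStrictFDerivAt f f' x) {α : Type*} {l : Filter α} {c : α → 𝕜}
    {a b : α → E} {v : E} (ha : Tendsto a l (𝓝 x)) (hb : Tendsto b l (𝓝 x))
    (hv : Tendsto (fun n ↦ c n • (a n - b n)) l (𝓝 v)) :
    Tendsto (fun n ↦ c n • (f (a n) - f (b n))) l (𝓝 (f' v)) := by
  have hsmall := calc
    (fun n ↦ c n • (f (a n) - f (b n)) - f' (c n • (a n - b n)))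
        =o[𝕜; l] fun n ↦ c n • (a n - b n) := by
      simpa [smul_sub] using
        (hf.isLittleOTVS.comp_tendsto (ha.prodMk_nhds hb)).smul_left c
    _ =O[𝕜; l] (1 : α → 𝕜) := Asymptotics.Filter.Tendsto.isBigOTVS_one _ hv
  rw [Asymptotics.isLittleOTVS_one] at hsmall
  simpa using hsmall.add ((f'.continuous.tendsto v).comp hv)

lemma tendsto_diffQuot_of_hasStrictFDerivAt [ContinuousAdd F] [ContinuousSMul 𝕜 F]
    {f' : E →L[𝕜] F} (hf : HasStrictFDerivAt f f' x) (y : E) :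
    Tendsto (diffQuot 𝕜 f) (𝓝[{p | p.2.2 ≠ 0}] (x, y, 0)) (𝓝 (f' y)) := by
  have hle : 𝓝[{p : E × E × 𝕜 | p.2.2 ≠ 0}] (x, y, 0) ≤ 𝓝 (x, y, 0) := nhdsWithin_le_nhds
  have hshift : Tendsto (fun p : E × E × 𝕜 ↦ p.1 + p.2.2 • p.2.1) (𝓝 (x, y, 0)) (𝓝 x) :=
    Continuous.tendsto' (by fun_prop) _ _ (by simp)
  have hbase : Tendsto (fun p : E × E × 𝕜 ↦ p.1) (𝓝 (x, y, 0)) (𝓝 x) := continuousAt_fst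
  have hdir : Tendsto (fun p : E × E × 𝕜 ↦ p.2.1) (𝓝 (x, y, 0)) (𝓝 y) :=
    Continuous.tendsto' (by fun_prop) _ _ rfl
  refine tendsto_smul_sub_of_hasStrictFDerivAt hf (hshift.mono_left hle) (hbase.mono_left hle)
    ((hdir.mono_left hle).congr' ?_)
  filter_upwards [self_mem_nhdsWithin] with p hp
  rw [add_sub_cancel_left, inv_smul_smul₀ hp]

lemma isC1On_of_forall_hasStrictFDerivAt [IsTopologicalAddGroup F] [ContinuousSMul 𝕜 F] [T2Space F]
    (hf : ∀ x ∈ U, ∃ f' : E →L[𝕜] F, HasStrictFDerivAt f f' x) : IsC1On 𝕜 U f := by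
  have hfc : ∀ x ∈ U, ContinuousAt f x := fun x hx ↦ (hf x hx).choose_spec.continuousAt
  have hlim : ∀ p ∈ UOne 𝕜 U, ∃ w, Tendsto (diffQuot 𝕜 f) (𝓝[{p | p.2.2 ≠ 0}] p) (𝓝 w) := by
    rintro ⟨x, y, t⟩ ⟨hx, hxy⟩
    rcases eq_or_ne t 0 with rfl | ht
    · obtain ⟨f', hf'⟩ := hf x hx
      exact ⟨f' y, tendsto_diffQuot_of_hasStrictFDerivAt hf' y⟩
    · exact ⟨_, (continuousAt_diffQuot ht (hfc x hx) (hfc _ hxy)).continuousWithinAt⟩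
  refine ⟨fun x hx ↦ (hfc x hx).continuousWithinAt, extendFrom {p | p.2.2 ≠ 0} (diffQuot 𝕜 f),
    continuousOn_extendFrom (fun p _ ↦ dense_setOf_snd_snd_ne_zero p) hlim, ?_⟩
  rintro ⟨x, y, t⟩ ⟨hx, hxy⟩ ht
  exact extendFrom_eq (dense_setOf_snd_snd_ne_zero _)
    (continuousAt_diffQuot ht (hfc x hx) (hfc _ hxy)).continuousWithinAt

end StrictDerivative

section Normed

variable {𝕜 E F : Type*} [NontriviallyNormedField 𝕜] [NormedAddCommGroup E] [NormedSpace 𝕜 E]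
  [NormedAddCommGroup F] [NormedSpace 𝕜 F] {U : Set E} {f : E → F} {g : E × E × 𝕜 → F} {x : E}

variable (𝕜 E) in
lemma exists_smul_eq_and_norm_le :
    ∃ C > 0, ∀ h : E, ∃ (t : 𝕜) (v : E), t • v = h ∧ ‖t‖ ≤ C * ‖h‖ ∧ ‖v‖ ≤ 1 := by
  obtain ⟨c, hc⟩ := NormedField.exists_one_lt_norm 𝕜
  refine ⟨‖c‖, zero_lt_one.trans hc, fun h ↦ ?_⟩
  rcases eq_or_ne h 0 with rfl | hh
  · exact ⟨0, 0, by simp⟩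
  · obtain ⟨d, hd, hle, -, hinv⟩ := rescale_to_shell hc one_pos hh
    exact ⟨d⁻¹, d • h, inv_smul_smul₀ hd h, by simpa using hinv, hle.le⟩

theorem IsDiffQuotOn.hasStrictFDerivAt_derivCLM [ProperSpace E] (hg : IsDiffQuotOn 𝕜 U f g)
    (hU : IsOpen U) (hgc : ContinuousOn g (UOne 𝕜 U)) (hx : x ∈ U) :
    HasStrictFDerivAt f (hg.derivCLM hU hgc hx) x := by
  obtain ⟨C, hC, hrescale⟩ := exists_smul_eq_and_norm_le 𝕜 E
  choose τ ν hτν hτ hν using hrescale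
  have hτ_zero : Tendsto τ (𝓝 0) (𝓝 0) :=
    squeeze_zero_norm hτ (Continuous.tendsto' (by fun_prop) _ _ (by simp))
  have hpair : Tendsto (fun p : E × E ↦ (p.2, τ (p.1 - p.2))) (𝓝 (x, x)) (𝓝 (x, 0)) :=
    continuousAt_snd.prodMk_nhds
      (hτ_zero.comp (Continuous.tendsto' (by fun_prop) _ _ (sub_self x)))
  refine .of_isLittleO (Asymptotics.isLittleO_iff.2 fun ε hε ↦ ?_)
  filter_upwards [hpair.eventually (eventually_forall_mem_UOne_and_norm_sub_lt hU hgc hx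
    (isCompact_closedBall (0 : E) 1) (div_pos hε hC))] with ⟨y, z⟩ hyz
  set t := τ (y - z)
  set v := ν (y - z)
  have htv : t • v = y - z := hτν (y - z)
  obtain ⟨hmem, hlt⟩ := hyz v (mem_closedBall_zero_iff.2 (hν _))
  have hquot : f y - f z = t • g (z, v, t) := by
    rw [hg.smul_eq_sub hmem, htv, add_sub_cancel]
  calc ‖f y - f z - hg.derivCLM hU hgc hx (y - z)‖
      = ‖t • (g (z, v, t) - g (x, v, 0))‖ := by
        rw [hquot, ← htv, map_smul, smul_sub]; rfl
    _ = ‖t‖ * ‖g (z, v, t) - g (x, v, 0)‖ := norm_smul _ _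
    _ ≤ C * ‖y - z‖ * (ε / C) := by gcongr; exact hτ _
    _ = ε * ‖y - z‖ := by field_simp

theorem isC1On_iff_forall_hasStrictFDerivAt [ProperSpace E] (hU : IsOpen U) :
    IsC1On 𝕜 U f ↔ ∀ x ∈ U, ∃ f' : E →L[𝕜] F, HasStrictFDerivAt f f' x :=
  ⟨fun ⟨_, _, hgc, hg⟩ _ hx ↦ ⟨_, hg.hasStrictFDerivAt_derivCLM hU hgc hx⟩,
    isC1On_of_forall_hasStrictFDerivAt⟩

lemma continuousAt_of_hasFDerivAt_of_hasStrictFDerivAt {f' : E → E →L[𝕜] F}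
    (hder : ∀ᶠ y in 𝓝 x, HasFDerivAt f (f' y) y) (hstrict : HasStrictFDerivAt f (f' x) x) :
    ContinuousAt f' x := by
  rw [Metric.continuousAt_iff']
  intro ε hε
  have hdiag : Tendsto (fun y ↦ (y, y)) (𝓝 x) (𝓝 (x, x)) := tendsto_id.prodMk_nhds tendsto_id
  have hlip := Asymptotics.isLittleO_iff.1 hstrict.isLittleO (half_pos hε)
  filter_upwards [hder, hdiag.eventually hlip.eventually_nhds] with y hy hlip_y
  have hslice : Tendsto (fun z ↦ (z, y)) (𝓝 y) (𝓝 (y, y)) :=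
    tendsto_id.prodMk_nhds tendsto_const_nhds
  have hbound : ‖f' y - f' x‖ ≤ ε / 2 := by
    refine (hy.sub (f' x).hasFDerivAt).le_of_lip' (half_pos hε).le ?_
    filter_upwards [hslice.eventually hlip_y] with z hz
    calc ‖f z - f' x z - (f y - f' x y)‖ = ‖f z - f y - f' x (z - y)‖ := by
          rw [map_sub, sub_sub_sub_comm]
      _ ≤ ε / 2 * ‖z - y‖ := hz
  rw [dist_eq_norm]
  exact hbound.trans_lt (half_lt_self hε)

end Normed

theorem contDiffOn_one_iff_forall_hasStrictFDerivAt {𝕜 E F : Type*} [RCLike 𝕜]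
    [NormedAddCommGroup E] [NormedSpace 𝕜 E] [NormedAddCommGroup F] [NormedSpace 𝕜 F]
    {U : Set E} (hU : IsOpen U) {f : E → F} :
    ContDiffOn 𝕜 1 f U ↔ ∀ x ∈ U, ∃ f' : E →L[𝕜] F, HasStrictFDerivAt f f' x := by
  refine ⟨fun hf x hx ↦ ⟨_, (hf.contDiffAt (hU.mem_nhds hx)).hasStrictFDerivAt one_ne_zero⟩,
    fun hf ↦ ?_⟩
  choose! f' hf' using hf
  intro x hx
  have hder : ∀ y ∈ U, HasFDerivAt f (f' y) y := fun y hy ↦ (hf' y hy).hasFDerivAt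
  have hcont : ContinuousOn f' U := fun y hy ↦
    (continuousAt_of_hasFDerivAt_of_hasStrictFDerivAt
      (eventually_of_mem (hU.mem_nhds hy) hder) (hf' y hy)).continuousWithinAt
  exact (contDiffAt_one_iff.2 ⟨f', U, hU.mem_nhds hx, hcont, hder⟩).contDiffWithinAt

theorem classical_real_C1_iff_diff_quotient_C1_general {𝕜 E F : Type*} [RCLike 𝕜]
    [NormedAddCommGroup E] [NormedSpace 𝕜 E] [FiniteDimensional 𝕜 E]
    [NormedAddCommGroup F] [NormedSpace 𝕜 F] {U : Set E} (hU : IsOpen U) (f : E → F) :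
    ContDiffOn 𝕜 1 f U ↔ IsC1On 𝕜 U f := by
  have : ProperSpace E := FiniteDimensional.proper_rclike 𝕜 E
  rw [contDiffOn_one_iff_forall_hasStrictFDerivAt hU, isC1On_iff_forall_hasStrictFDerivAt hU]

/-- **Compatibility with classical real calculus.**  For `U ⊆ ℝⁿ` open and
`f : U → ℝᵐ`, the map `f` is continuously differentiable in the classical (Fréchet)
sense on `U` if and only if it is `C¹` in the extended-difference-quotient sense,
i.e. `f` is continuous on `U` and admits a continuous map `f^{[1]} : U^{[1]} → ℝᵐ`
extending its directional difference quotients. -/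
theorem classical_real_C1_iff_diff_quotient_C1
    {n m : ℕ} {U : Set (Fin n → ℝ)} (hU : IsOpen U)
    (f : (Fin n → ℝ) → (Fin m → ℝ)) :
    ContDiffOn ℝ 1 f U ↔
      (ContinuousOn f U ∧
        ∃ g : (Fin n → ℝ) × (Fin n → ℝ) × ℝ → (Fin m → ℝ),
          ContinuousOn g (UOne ℝ U) ∧ IsDiffQuotOn ℝ U f g) := by
  exact classical_real_C1_iff_diff_quotient_C1_general hU f
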